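/- Fix an integer base b ≥ 2, s ≥ 1, and integers t, m with 0 ≤ t ≤ m. Let P be a (t,m,s)-net in base b and set L = m − t. Then for every j ∈ ℕ_0^s with |j| ≥ L+1, every i ∈ ∇_j and every k ∈ Δ_{j−1}, one has |Σ_{p∈P} Ψ^j_{i,k}(p)| ≤ b^{t−1} (b−1)^J b^{|j|/2}, where J = #{ℓ ∈ {1,…,s} : j_ℓ ≥ 1}. -/

import Mathlib

open MeasureTheory ENNReal Set

noncomputable section

/-- The index set `Δ_{j-1}` (for level `j`). -/
def deltaIdx (b j : ℕ) : Finset ℕ := if j = 0 then {0} else Finset.range (b ^ (j - 1))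

/-- The index set `∇_j`. -/
def nablaIdx (b j : ℕ) : Finset ℕ := if j = 0 then {0} else Finset.range b

/-- The univariate Haar-type wavelet `ψ^j_{i,k}` in base `b`. -/
def haarPsi (b : ℕ) (j i k : ℕ) (x : ℝ) : ℝ :=
  if j = 0 then (Set.Ico (0:ℝ) 1).indicator (fun _ => (1:ℝ)) x
  else (b : ℝ) ^ ((j : ℝ) / 2 - 1) *
    ((b : ℝ) *
        (Set.Ico ((b:ℝ) ^ (-(j:ℝ)) * ((b:ℝ) * k + i))
          ((b:ℝ) ^ (-(j:ℝ)) * ((b:ℝ) * k + i + 1))).indicator (fun _ => (1:ℝ)) x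
      - (Set.Ico ((b:ℝ) ^ (1 - (j:ℝ)) * k)
          ((b:ℝ) ^ (1 - (j:ℝ)) * (k + 1))).indicator (fun _ => (1:ℝ)) x)

/-- The multivariate tensor product wavelet `Ψ^j_{i,k}`. -/
def haarPsiS (b s : ℕ) (j i k : Fin s → ℕ) (x : Fin s → ℝ) : ℝ :=
  ∏ ℓ, haarPsi b (j ℓ) (i ℓ) (k ℓ) (x ℓ)

/-- The unit cube `[0,1]^s`. -/
def cube (s : ℕ) : Set (Fin s → ℝ) := Set.Icc 0 1

/-- The index set `Δ_{j-1}` for multi-indices. -/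
def deltaIdxS (b s : ℕ) (j : Fin s → ℕ) : Finset (Fin s → ℕ) :=
  Fintype.piFinset fun ℓ => deltaIdx b (j ℓ)

/-- The index set `∇_j` for multi-indices. -/
def nablaIdxS (b s : ℕ) (j : Fin s → ℕ) : Finset (Fin s → ℕ) :=
  Fintype.piFinset fun ℓ => nablaIdx b (j ℓ)

/-- The Haar coefficient `⟨f, Ψ^j_{i,k}⟩ = ∫_{[0,1]^s} f Ψ^j_{i,k}`. -/
def haarCoef (b s : ℕ) (f : (Fin s → ℝ) → ℝ) (j i k : Fin s → ℕ) : ℝ :=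
  ∫ x in cube s, f x * haarPsiS b s j i k x

/-- Finite `ℓ^p`-type norm with exponent `p ∈ [1,∞]` (maximum when `p = ∞`). -/
def lpIdx (p : ℝ≥0∞) {ι : Type*} (A : Finset ι) (g : ι → ℝ≥0∞) : ℝ≥0∞ :=
  if p = ∞ then A.sup g else (∑ a ∈ A, g a ^ p.toReal) ^ (1 / p.toReal)

/-- `ℓ^q`-type norm over an arbitrary index type (supremum when `q = ∞`). -/
def lqIdx (q : ℝ≥0∞) {ι : Type*} (g : ι → ℝ≥0∞) : ℝ≥0∞ :=
  if q = ∞ then ⨆ i, g i else (∑' i, g i ^ q.toReal) ^ (1 / q.toReal)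

/-- The Haar wavelet norm `‖f‖_{wav,α,s,p,q}` (with the conventions for `p = ∞`, `q = ∞`). -/
def wavNorm (b s : ℕ) (α : ℝ) (p q : ℝ≥0∞) (f : (Fin s → ℝ) → ℝ) : ℝ≥0∞ :=
  lqIdx q fun j : Fin s → ℕ =>
    ENNReal.ofReal ((b : ℝ) ^ ((α - 1 / p.toReal + 1 / 2) * ∑ ℓ, (j ℓ : ℝ))) *
      lpIdx p (deltaIdxS b s j ×ˢ nablaIdxS b s j)
        (fun ki => ENNReal.ofReal |haarCoef b s f j ki.2 ki.1|)

/-- The pointwise wavelet expansion `S(f)`. -/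
def wavExp (b s : ℕ) (f : (Fin s → ℝ) → ℝ) (x : Fin s → ℝ) : ℝ :=
  ∑' j : Fin s → ℕ, ∑ k ∈ deltaIdxS b s j, ∑ i ∈ nablaIdxS b s j,
    haarCoef b s f j i k * haarPsiS b s j i k x

/-- The elementary `b`-adic box `E^j_a`. -/
def elemBox (b s : ℕ) (j a : Fin s → ℕ) : Set (Fin s → ℝ) :=
  {x | ∀ ℓ, (a ℓ : ℝ) * ((b : ℝ) ^ (j ℓ))⁻¹ ≤ x ℓ ∧ x ℓ < ((a ℓ : ℝ) + 1) * ((b : ℝ) ^ (j ℓ))⁻¹}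

open Classical in
/-- A `(t,m,s)`-net in base `b`: a multiset of `b^m` points of `[0,1)^s` such that every
elementary box of volume `b^{t-m}` contains exactly `b^t` of the points. -/
def IsNet (b s t m : ℕ) (P : Multiset (Fin s → ℝ)) : Prop :=
  Multiset.card P = b ^ m ∧ (∀ x ∈ P, ∀ ℓ, 0 ≤ x ℓ ∧ x ℓ < 1) ∧
    ∀ j a : Fin s → ℕ, (∑ ℓ, j ℓ) = m - t → (∀ ℓ, a ℓ < b ^ j ℓ) →
      Multiset.card (P.filter (· ∈ elemBox b s j a)) = b ^ t

/-- The space `V^{s,L}`, spanned by indicators of elementary boxes of volume `b^{-L}`. -/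
def Vspace (b s L : ℕ) : Submodule ℝ ((Fin s → ℝ) → ℝ) :=
  Submodule.span ℝ
    {f | ∃ j a : Fin s → ℕ, (∑ ℓ, j ℓ) = L ∧ (∀ ℓ, a ℓ < b ^ j ℓ) ∧
      f = (elemBox b s j a).indicator fun _ => (1:ℝ)}

lemma haarPsi_abs_le (b j i k : ℕ) (hb : 2 ≤ b) (hi : i ∈ nablaIdx b j) (hk : k ∈ deltaIdx b j)
    (x : ℝ) :
    |haarPsi b j i k x| ≤
      (if ((k : ℝ) * ((b : ℝ) ^ (j - 1))⁻¹ ≤ x ∧ x < ((k : ℝ) + 1) * ((b : ℝ) ^ (j - 1))⁻¹)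
        then (1:ℝ) else 0) *
      ((b : ℝ) ^ ((j : ℝ) / 2) * (if 1 ≤ j then ((b : ℝ) - 1) / b else 1)) := by
  have hb' : (2:ℝ) ≤ b := by exact_mod_cast hb
  have hb0 : (0:ℝ) < b := by linarith
  rcases Nat.eq_zero_or_pos j with h | h
  · subst h
    simp only [deltaIdx, if_true, Finset.mem_singleton] at hk
    subst hk
    simp only [haarPsi, Set.indicator, Set.mem_Ico]
    by_cases hx : 0 ≤ x ∧ x < 1 <;> simp [hx]
  · have hj : j ≠ 0 := by omega
    simp only [nablaIdx, hj, if_false, Finset.mem_range] at hi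
    obtain ⟨n, rfl⟩ : ∃ n, j = n + 1 := ⟨j - 1, by omega⟩
    have e1 : (b:ℝ) ^ (1 - ((n+1 : ℕ):ℝ)) = ((b:ℝ) ^ n)⁻¹ := by
      rw [← Real.rpow_natCast, ← Real.rpow_neg hb0.le]; congr 1; push_cast; ring
    have e2 : (b:ℝ) ^ (-((n+1 : ℕ):ℝ)) = ((b:ℝ) ^ n)⁻¹ * (b:ℝ)⁻¹ := by
      rw [Real.rpow_neg hb0.le, Real.rpow_natCast, pow_succ, mul_inv]
    have e3 : (b:ℝ) ^ (((n+1 : ℕ):ℝ) / 2 - 1) = (b:ℝ) ^ (((n+1 : ℕ):ℝ) / 2) * (b:ℝ)⁻¹ := by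
      rw [Real.rpow_sub_one hb0.ne']; rfl
    simp only [haarPsi, hj, if_false, e1, e2, e3, if_pos (Nat.le_add_left 1 n), Set.indicator, Set.mem_Ico,
      Nat.add_sub_cancel]
    have hi' : (i:ℝ) + 1 ≤ b := by exact_mod_cast hi
    have hi0 : (0:ℝ) ≤ i := by positivity
    have hB : 0 < (b:ℝ) ^ (((n+1 : ℕ):ℝ) / 2) := by positivity
    have hc : 0 < ((b:ℝ) ^ n)⁻¹ := by positivity
    generalize (b:ℝ) ^ (((n+1 : ℕ):ℝ) / 2) = B at *
    generalize ((b:ℝ) ^ n)⁻¹ = c at *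
    have sub1 : c * (b:ℝ)⁻¹ * (b * k + i) ≤ x → k * c ≤ x := by
      intro hx
      have : c * (b:ℝ)⁻¹ * (b * k + i) = k * c + c * i / b := by field_simp
      have : 0 ≤ c * i / b := by positivity
      linarith
    have sub2 : x < c * (b:ℝ)⁻¹ * (b * k + i + 1) → x < (k + 1) * c := by
      intro hx
      have : c * (b:ℝ)⁻¹ * (b * k + i + 1) = k * c + c * ((i + 1) / b) := by field_simp; ring
      have h1 : ((i:ℝ) + 1) / b ≤ 1 := by rw [div_le_one hb0]; exact hi'
      nlinarith
    have hv : (1:ℝ) / b ≤ (b - 1) / b := by gcongr; linarith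
    rw [mul_comm c (k:ℝ), mul_comm c ((k:ℝ) + 1)]
    by_cases h2 : k * c ≤ x ∧ x < (k + 1) * c
    · by_cases h3 : c * (b:ℝ)⁻¹ * (b * k + i) ≤ x ∧ x < c * (b:ℝ)⁻¹ * (b * k + i + 1)
      · simp only [h2, h3, and_self, if_true, mul_one, one_mul]
        rw [abs_of_nonneg]
        · apply le_of_eq; ring
        · have : (0:ℝ) ≤ b - 1 := by linarith
          positivity
      · simp only [h2, h3, and_self, if_true, if_false, mul_zero, one_mul, zero_sub]
        rw [mul_neg, abs_neg, abs_of_nonneg (by positivity), mul_assoc]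
        gcongr
        simpa using hv
    · have h3 : ¬ (c * (b:ℝ)⁻¹ * (b * k + i) ≤ x ∧ x < c * (b:ℝ)⁻¹ * (b * k + i + 1)) :=
        fun h => h2 ⟨sub1 h.1, sub2 h.2⟩
      simp [h2, h3]

lemma elemBox_parent (b s : ℕ) (hb : 2 ≤ b) (d a : Fin s → ℕ) (l : Fin s) (hl : 1 ≤ d l) :
    elemBox b s d a ⊆ elemBox b s (Function.update d l (d l - 1)) (Function.update a l (a l / b)) := by
  intro x hx r
  by_cases hr : r = l
  · subst hr
    obtain ⟨h1, h2⟩ := hx r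
    simp only [Function.update_self]
    obtain ⟨n, hn⟩ : ∃ n, d r = n + 1 := ⟨d r - 1, by omega⟩
    rw [hn] at h1 h2 ⊢
    have hb0 : (0:ℝ) < b := by exact_mod_cast (by omega : 0 < b)
    simp only [Nat.add_sub_cancel]
    have hp : (0:ℝ) < (b:ℝ)^n := by positivity
    have f1 : ((a r / b : ℕ):ℝ) * b ≤ a r := by exact_mod_cast Nat.div_mul_le_self _ _
    have f2 : ((a r : ℕ):ℝ) + 1 ≤ ((a r / b : ℕ) + 1) * b := by
      have := Nat.lt_div_mul_add (a := a r) (b := b) (by omega)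
      have h : a r + 1 ≤ (a r / b + 1) * b := by rw [add_mul]; omega
      exact_mod_cast h
    rw [← div_eq_mul_inv] at h1 h2 ⊢
    rw [← div_eq_mul_inv]
    rw [pow_succ] at h1 h2
    constructor
    · refine le_trans ?_ h1
      rw [div_le_div_iff₀ hp (by positivity)]
      nlinarith
    · refine lt_of_lt_of_le h2 ?_
      rw [div_le_div_iff₀ (by positivity) hp]
      nlinarith
  · simpa [Function.update_of_ne hr] using hx r

lemma elemBox_child (b s : ℕ) (hb : 2 ≤ b) (d a : Fin s → ℕ) (l : Fin s) (x : Fin s → ℝ)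
    (hx : x ∈ elemBox b s d a) :
    ∃ c ∈ Finset.range b,
      x ∈ elemBox b s (Function.update d l (d l + 1)) (Function.update a l (b * a l + c)) := by
  obtain ⟨h1, h2⟩ := hx l
  have hb0 : (0:ℝ) < b := by exact_mod_cast (by omega : 0 < b)
  have hp : (0:ℝ) < (b:ℝ)^(d l) := by positivity
  rw [← div_eq_mul_inv, div_le_iff₀ hp] at h1
  rw [← div_eq_mul_inv, lt_div_iff₀ hp] at h2
  have hx0 : 0 ≤ x l * (b:ℝ)^(d l + 1) := by
    have : 0 ≤ x l * (b:ℝ)^(d l) := le_trans (by positivity) h1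
    rw [pow_succ, ← mul_assoc]; positivity
  set N := ⌊x l * (b:ℝ)^(d l + 1)⌋₊ with hN
  have g1 : (N:ℝ) ≤ x l * (b:ℝ)^(d l + 1) := Nat.floor_le hx0
  have g2 : x l * (b:ℝ)^(d l + 1) < N + 1 := Nat.lt_floor_add_one _
  have g3 : b * a l ≤ N := by
    apply Nat.le_floor
    push_cast
    rw [pow_succ]; nlinarith
  have g4 : N < b * a l + b := by
    rw [hN, Nat.floor_lt hx0]
    push_cast
    rw [pow_succ]; nlinarith
  refine ⟨N - b * a l, Finset.mem_range.2 (by omega), ?_⟩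
  intro r
  by_cases hr : r = l
  · subst hr
    simp only [Function.update_self]
    rw [Nat.add_sub_cancel' g3, ← div_eq_mul_inv, ← div_eq_mul_inv, div_le_iff₀ (by positivity),
      lt_div_iff₀ (by positivity)]
    exact ⟨g1, g2⟩
  · simpa [Function.update_of_ne hr] using hx r

lemma sum_update_aux (s : ℕ) (d : Fin s → ℕ) (l : Fin s) (v : ℕ) :
    ∑ r, Function.update d l v r + d l = ∑ r, d r + v := by
  rw [Finset.sum_update_of_mem (Finset.mem_univ l),
    ← Finset.add_sum_erase Finset.univ d (Finset.mem_univ l), Finset.sdiff_singleton_eq_erase]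
  ring

open Classical in
lemma countP_le_sum {α : Type*} (P : Multiset α) (p : α → Prop) (n : ℕ) (q : ℕ → α → Prop)
    (h : ∀ x, p x → ∃ c ∈ Finset.range n, q c x) :
    P.countP p ≤ ∑ c ∈ Finset.range n, P.countP (q c) := by
  induction P using Multiset.induction_on with
  | empty => simp
  | cons x P ih =>
    simp only [Multiset.countP_cons, Finset.sum_add_distrib]
    apply add_le_add ih
    split_ifs with hp
    · obtain ⟨c, hc, hq⟩ := h x hp
      calc 1 = if q c x then 1 else 0 := by simp [hq]
        _ ≤ _ := Finset.single_le_sum (f := fun c => if q c x then 1 else 0)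
                  (fun _ _ => Nat.zero_le _) hc
    · exact Nat.zero_le _

open Classical in
lemma net_fine (b s t m : ℕ) (hb : 2 ≤ b) (P : Multiset (Fin s → ℝ)) (hP : IsNet b s t m P)
    (n : ℕ) : ∀ d a : Fin s → ℕ, ∑ l, d l = m - t + n → (∀ l, a l < b ^ d l) →
      P.countP (· ∈ elemBox b s d a) ≤ b ^ t := by
  induction n with
  | zero =>
    intro d a hd ha
    rw [Multiset.countP_eq_card_filter]
    exact (hP.2.2 d a hd ha).le
  | succ n ih =>
    intro d a hd ha
    obtain ⟨l, -, hl⟩ : ∃ l ∈ Finset.univ, d l ≠ 0 := by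
      apply Finset.exists_ne_zero_of_sum_ne_zero; omega
    have hl1 : 1 ≤ d l := by omega
    have hs := sum_update_aux s d l (d l - 1)
    refine le_trans ?_ (ih (Function.update d l (d l - 1)) (Function.update a l (a l / b))
      (by omega) ?_)
    · rw [Multiset.countP_eq_card_filter, Multiset.countP_eq_card_filter]
      exact Multiset.card_le_card (Multiset.monotone_filter_right P
        (fun x hx => elemBox_parent b s hb d a l hl1 hx))
    · intro r
      by_cases hr : r = l
      · subst hr
        simp only [Function.update_self]
        apply Nat.div_lt_of_lt_mul
        rw [← pow_succ', Nat.sub_add_cancel hl1]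
        exact ha r
      · simpa [Function.update_of_ne hr] using ha r

open Classical in
lemma net_coarse (b s t m : ℕ) (hb : 2 ≤ b) (hs : 1 ≤ s) (P : Multiset (Fin s → ℝ))
    (hP : IsNet b s t m P)
    (n : ℕ) : ∀ d a : Fin s → ℕ, m - t ≤ ∑ l, d l + n → (∀ l, a l < b ^ d l) →
      P.countP (· ∈ elemBox b s d a) ≤ b ^ (t + n) := by
  induction n with
  | zero =>
    intro d a hd ha
    exact net_fine b s t m hb P hP (∑ l, d l - (m - t)) d a (by omega) ha
  | succ n ih =>
    intro d a hd ha
    have hsum := sum_update_aux s d ⟨0, hs⟩ (d ⟨0, hs⟩ + 1)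
    refine le_trans (countP_le_sum P _ b _
      (fun x hx => elemBox_child b s hb d a ⟨0, hs⟩ x hx)) ?_
    refine le_trans (Finset.sum_le_card_nsmul _ _ (b ^ (t + n)) ?_) ?_
    · intro c hc
      rw [Finset.mem_range] at hc
      apply ih
      · omega
      · intro r
        by_cases hr : r = ⟨0, hs⟩
        · subst hr
          simp only [Function.update_self]
          have := ha ⟨0, hs⟩
          rw [pow_succ']
          calc b * a ⟨0, hs⟩ + c < b * (a ⟨0, hs⟩ + 1) := by rw [mul_add]; omega
            _ ≤ _ := Nat.mul_le_mul_left _ this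
        · simpa [Function.update_of_ne hr] using ha r
    · simp only [Finset.card_range, smul_eq_mul]
      rw [← add_assoc, pow_succ']

open Classical in
lemma abs_map_sum_le {α : Type*} (P : Multiset α) (f : α → ℝ) (S : Set α) (C : ℝ)
    (h : ∀ x, |f x| ≤ (if x ∈ S then 1 else 0) * C) :
    |(P.map f).sum| ≤ (P.countP (· ∈ S) : ℕ) * C := by
  induction P using Multiset.induction_on with
  | empty => simp
  | cons x P ih =>
    simp only [Multiset.map_cons, Multiset.sum_cons, Multiset.countP_cons]
    refine le_trans (abs_add_le _ _) ?_
    push_cast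
    rw [add_mul, add_comm]
    exact add_le_add ih (h x)

lemma haarPsiS_abs_le (b s : ℕ) (j i k : Fin s → ℕ) (hb : 2 ≤ b)
    (hi : ∀ ℓ, i ℓ ∈ nablaIdx b (j ℓ)) (hk : ∀ ℓ, k ℓ ∈ deltaIdx b (j ℓ)) (x : Fin s → ℝ)
    [Decidable (x ∈ elemBox b s (fun l => j l - 1) k)] :
    |haarPsiS b s j i k x| ≤ (if x ∈ elemBox b s (fun l => j l - 1) k then 1 else 0) *
      ((b : ℝ) ^ ((∑ ℓ, (j ℓ : ℝ)) / 2) *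
        (((b : ℝ) - 1) / b) ^ ((Finset.univ.filter fun ℓ : Fin s => 1 ≤ j ℓ).card)) := by
  have hb0 : (0:ℝ) < b := by exact_mod_cast (by omega : 0 < b)
  unfold haarPsiS
  rw [Finset.abs_prod]
  refine le_trans (Finset.prod_le_prod (fun _ _ => abs_nonneg _)
    (fun l _ => haarPsi_abs_le b (j l) (i l) (k l) hb (hi l) (hk l) (x l))) ?_
  rw [Finset.prod_mul_distrib, Finset.prod_mul_distrib]
  apply le_of_eq
  congr 1
  · rw [Finset.prod_ite_zero]
    simp only [elemBox, Set.mem_ofPred_eq, Finset.mem_univ, true_imp_iff, Finset.prod_const_one]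
    congr
  · congr 1
    · rw [Finset.sum_div, Real.rpow_sum_of_pos hb0]
    · rw [Finset.prod_ite]; simp [div_pow]

/-- Bound on the sum of a fine-scale wavelet over the points of a
`(t,m,s)`-net: `|Σ_{p∈P} Ψ^j_{i,k}(p)| ≤ b^{t-1} (b-1)^J b^{|j|/2}` whenever `|j| ≥ m-t+1`. -/
theorem net_wavelet_sum_bound (b s t m : ℕ) (hb : 2 ≤ b) (hs : 1 ≤ s) (htm : t ≤ m)
    (P : Multiset (Fin s → ℝ)) (hP : IsNet b s t m P)
    (j i k : Fin s → ℕ) (hj : m - t + 1 ≤ ∑ ℓ, j ℓ)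
    (hi : ∀ ℓ, i ℓ ∈ nablaIdx b (j ℓ)) (hk : ∀ ℓ, k ℓ ∈ deltaIdx b (j ℓ)) :
    |(P.map (haarPsiS b s j i k)).sum| ≤
      (b : ℝ) ^ ((t : ℝ) - 1) *
        ((b : ℝ) - 1) ^ ((Finset.univ.filter fun ℓ : Fin s => 1 ≤ j ℓ).card) *
        (b : ℝ) ^ ((∑ ℓ, (j ℓ : ℝ)) / 2) := by
  classical
  have hb0 : (0:ℝ) < b := by exact_mod_cast (by omega : 0 < b)
  have hb2 : (2:ℝ) ≤ b := by exact_mod_cast hb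
  have hb1 : (0:ℝ) ≤ (b:ℝ) - 1 := by linarith
  have key := abs_map_sum_le P (haarPsiS b s j i k) (elemBox b s (fun l => j l - 1) k) _
    (fun x => haarPsiS_abs_le b s j i k hb hi hk x)
  refine le_trans key ?_
  have hsum : ∑ l, (j l - 1) + (Finset.univ.filter fun ℓ : Fin s => 1 ≤ j ℓ).card = ∑ l, j l := by
    rw [Finset.card_filter, ← Finset.sum_add_distrib]
    apply Finset.sum_congr rfl
    intro l _
    split_ifs <;> omega
  have hJ : 1 ≤ (Finset.univ.filter fun ℓ : Fin s => 1 ≤ j ℓ).card := by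
    obtain ⟨l, -, hl⟩ : ∃ l ∈ Finset.univ, j l ≠ 0 := by
      apply Finset.exists_ne_zero_of_sum_ne_zero; omega
    exact Finset.card_pos.2 ⟨l, by simp; omega⟩
  generalize (Finset.univ.filter fun ℓ : Fin s => 1 ≤ j ℓ).card = J at *
  obtain ⟨n, rfl⟩ : ∃ n, J = n + 1 := ⟨J - 1, by omega⟩
  have hc := net_coarse b s t m hb hs P hP n (fun l => j l - 1) k (by omega) (by
    intro l
    have := hk l
    unfold deltaIdx at this
    split_ifs at this with h0
    · simp only [Finset.mem_singleton] at this
      simp [this, h0]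
    · simpa using this)
  have hc' : ((P.countP (· ∈ elemBox b s (fun l => j l - 1) k) : ℕ) : ℝ) ≤ (b:ℝ) ^ (t + n) := by
    exact_mod_cast hc
  refine le_trans (mul_le_mul_of_nonneg_right hc' (by positivity)) (le_of_eq ?_)
  rw [Real.rpow_sub_one hb0.ne', Real.rpow_natCast, div_pow]
  field_simp
  ring

end
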